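/- arXiv:2505.01611 — 2 statements merged into one kernel-verified Lean document; each statement's English description precedes it below -/
import Mathlib

section
/- Suppose the orthogonal projection of Ω onto the x-axis is the segment [0, 2], and Ω ∩ {x = 0} = {(0,0)} and Ω ∩ {x = 2} = {(2,0)} (so (0,0) and (2,0) are the extreme left and right points of Ω). Let u ∈ 𝒰_Ω. Then at every point (x, y) ∈ Ω with 0 < x ≤ 1 at which u is differentiable, one has |u_x(x, y)| ≤ (1/x) · ( u(x, y) − y · u_y(x, y) ). -/
open Set MeasureTheory
open scoped ENNReal

/-- Partial derivative of `u` in the `x` direction (junk value where `u` is not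
differentiable). -/
noncomputable def ux (u : ℝ × ℝ → ℝ) (z : ℝ × ℝ) : ℝ := fderiv ℝ u z (1, 0)

/-- Partial derivative of `u` in the `y` direction. -/
noncomputable def uy (u : ℝ × ℝ → ℝ) (z : ℝ × ℝ) : ℝ := fderiv ℝ u z (0, 1)

/-- Directional derivative of `u` in the direction `h`. -/
noncomputable def uh (h : ℝ × ℝ) (u : ℝ × ℝ → ℝ) (z : ℝ × ℝ) : ℝ := fderiv ℝ u z h

/-- The class `𝒰_Ω`: continuous concave functions on `Ω` vanishing on the boundary,
with uniformly bounded gradient over all interior points where it exists. -/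
def MemU (Ω : Set (ℝ × ℝ)) (u : ℝ × ℝ → ℝ) : Prop :=
  ContinuousOn u Ω ∧ ConcaveOn ℝ Ω u ∧ (∀ z ∈ frontier Ω, u z = 0) ∧
    ∃ C : ℝ, ∀ z ∈ interior Ω, ∀ g : (ℝ × ℝ) →L[ℝ] ℝ, HasFDerivAt u g z → ‖g‖ ≤ C

/-- The `L¹` norm of `f` over `Ω`. -/
noncomputable def L1N (Ω : Set (ℝ × ℝ)) (f : ℝ × ℝ → ℝ) : ℝ := ∫ z in Ω, |f z|

/-- The `L^p` norm of `f` over `Ω`, `p ∈ [1, ∞)`. -/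
noncomputable def LpN (Ω : Set (ℝ × ℝ)) (p : ℝ) (f : ℝ × ℝ → ℝ) : ℝ :=
  (∫ z in Ω, |f z| ^ p) ^ (1 / p)

/-- The `L^∞` norm (essential supremum) of `f` over `Ω`. -/
noncomputable def LinfN (Ω : Set (ℝ × ℝ)) (f : ℝ × ℝ → ℝ) : ℝ≥0∞ :=
  essSup (fun z => ENNReal.ofReal |f z|) (volume.restrict Ω)

/-- The width of `Ω` parallel to the (Euclidean unit) vector `h`: the distance between the
two lines of support of `Ω` parallel to `h`, i.e. the oscillation over `Ω` of the linear
functional given by the unit normal `(-h.2, h.1)` to `h`. -/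
noncomputable def widthPar (Ω : Set (ℝ × ℝ)) (h : ℝ × ℝ) : ℝ :=
  sSup ((fun z : ℝ × ℝ => -h.2 * z.1 + h.1 * z.2) '' Ω) -
    sInf ((fun z : ℝ × ℝ => -h.2 * z.1 + h.1 * z.2) '' Ω)

/-!
The graph of a concave function lies below each of its tangent planes. Comparing the tangent plane
at `z = (x, y)` with the nonnegative values of `u` at the two extreme points `(0, 0)` and `(2, 0)`
gives `x u_x ≤ u - y u_y` and `-(2 - x) u_x ≤ u - y u_y`. Whichever sign `u_x` has, one of the two
bounds `x |u_x|`, because `x ≤ 2 - x`.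
-/

theorem le_add_of_concaveOn_of_hasFDerivWithinAt {E : Type*} [NormedAddCommGroup E]
    [NormedSpace ℝ E] {s : Set E} {f : E → ℝ} {f' : E →L[ℝ] ℝ} {z w : E}
    (hf : ConcaveOn ℝ s f) (hf' : HasFDerivWithinAt f f' s z) (hz : z ∈ s) (hw : w ∈ s) :
    f w ≤ f z + f' (w - z) := by
  let γ : ℝ →ᵃ[ℝ] E := AffineMap.lineMap z w
  have hγ₀ : γ 0 = z := AffineMap.lineMap_apply_zero z w
  have hγ₁ : γ 1 = w := AffineMap.lineMap_apply_one z w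
  have hderiv : HasDerivWithinAt (f ∘ γ) (f' (w - z)) (γ ⁻¹' s) 0 :=
    HasFDerivWithinAt.comp_hasDerivWithinAt_of_eq 0 hf' AffineMap.hasDerivWithinAt_lineMap
      (mapsTo_preimage γ s) hγ₀.symm
  have hslope : slope (f ∘ γ) 0 1 ≤ f' (w - z) :=
    (hf.comp_affineMap γ).slope_le_of_hasDerivWithinAt (by rwa [mem_preimage, hγ₀])
      (by rwa [mem_preimage, hγ₁]) zero_lt_one hderiv
  rw [slope_def_field, Function.comp_apply, Function.comp_apply, hγ₀, hγ₁, sub_zero, div_one]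
    at hslope
  linarith

theorem mem_frontier_of_isOpenMap {X Y : Type*} [TopologicalSpace X] [TopologicalSpace Y]
    {f : X → Y} {s : Set X} {t : Set Y} {x : X} (hf : IsOpenMap f) (hst : MapsTo f s t)
    (hx : x ∈ s) (hfx : f x ∉ interior t) : x ∈ frontier s :=
  ⟨subset_closure hx, fun hxs => hfx (hf.mapsTo_interior hst hxs)⟩

theorem MemU.eq_zero_of_fst_notMem_Ioo {Ω : Set (ℝ × ℝ)} {u : ℝ × ℝ → ℝ} {a b : ℝ} {z : ℝ × ℝ}
    (hu : MemU Ω u) (hΩ : MapsTo Prod.fst Ω (Icc a b)) (hz : z ∈ Ω) (hz₁ : z.1 ∉ Ioo a b) :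
    u z = 0 :=
  hu.2.2.1 z (mem_frontier_of_isOpenMap isOpenMap_fst hΩ hz (by rwa [interior_Icc]))

theorem stmt_14_general {F : Type*} [NormedAddCommGroup F] [NormedSpace ℝ F] {s : Set (ℝ × F)}
    {f : ℝ × F → ℝ} {f' : ℝ × F →L[ℝ] ℝ} {z : ℝ × F} {ℓ : ℝ} (hf : ConcaveOn ℝ s f)
    (hleft : (0, 0) ∈ s) (hright : (ℓ, 0) ∈ s) (hfleft : 0 ≤ f (0, 0)) (hfright : 0 ≤ f (ℓ, 0))
    (hz : z ∈ s) (hz₀ : 0 < z.1) (hzℓ : z.1 ≤ ℓ / 2) (hf' : HasFDerivWithinAt f f' s z) :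
    |f' (1, 0)| ≤ (1 / z.1) * (f z - f' (0, z.2)) := by
  have tangent_bound {a : ℝ} (ha : (a, 0) ∈ s) (hfa : 0 ≤ f (a, 0)) :
      (z.1 - a) * f' (1, 0) ≤ f z - f' (0, z.2) := by
    have hsplit : ((a, 0) : ℝ × F) - z = (a - z.1) • (1, 0) - (0, z.2) := by ext <;> simp
    have htangent := le_add_of_concaveOn_of_hasFDerivWithinAt hf hf' hz ha
    rw [hsplit, map_sub, map_smul, smul_eq_mul] at htangent
    linarith
  have hupper : z.1 * f' (1, 0) ≤ f z - f' (0, z.2) := by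
    simpa only [sub_zero] using tangent_bound hleft hfleft
  have hlower : (ℓ - z.1) * -f' (1, 0) ≤ f z - f' (0, z.2) := by
    linarith [tangent_bound hright hfright]
  rw [one_div, inv_mul_eq_div, le_div_iff₀' hz₀]
  rcases le_total 0 (f' (1, 0)) with hpos | hneg
  · rwa [abs_of_nonneg hpos]
  · calc
      z.1 * |f' (1, 0)| = z.1 * -f' (1, 0) := by rw [abs_of_nonpos hneg]
      _ ≤ (ℓ - z.1) * -f' (1, 0) :=
        mul_le_mul_of_nonneg_right (by linarith) (neg_nonneg.2 hneg)
      _ ≤ f z - f' (0, z.2) := hlower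

/-- Lemma 2: if `Ω` projects onto `[0,2]` on the `x`-axis with extreme left
and right points `(0,0)` and `(2,0)`, then for every `u ∈ 𝒰_Ω`, at every point
`(x,y) ∈ Ω` with `0 < x ≤ 1` where `u` is differentiable one has
`|u_x| ≤ (1/x)(u - y u_y)`. -/
theorem stmt_14 (Ω : Set (ℝ × ℝ)) (hΩc : IsCompact Ω) (hΩconv : Convex ℝ Ω)
    (hΩint : (interior Ω).Nonempty)
    (hproj : (fun z : ℝ × ℝ => z.1) '' Ω = Icc 0 2)
    (hleft : Ω ∩ {z : ℝ × ℝ | z.1 = 0} = {((0 : ℝ), (0 : ℝ))})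
    (hright : Ω ∩ {z : ℝ × ℝ | z.1 = 2} = {((2 : ℝ), (0 : ℝ))})
    (u : ℝ × ℝ → ℝ) (hu : MemU Ω u) :
    ∀ z ∈ Ω, 0 < z.1 → z.1 ≤ 1 → ∀ g : (ℝ × ℝ) →L[ℝ] ℝ, HasFDerivAt u g z →
      |g (1, 0)| ≤ (1 / z.1) * (u z - z.2 * g (0, 1)) := by
  intro z hz hz₀ hz₁ g hg
  have hΩ : MapsTo Prod.fst Ω (Icc 0 2) := mapsTo_iff_image_subset.2 hproj.subset
  have hl : (0, 0) ∈ Ω := (hleft.superset rfl).1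
  have hr : (2, 0) ∈ Ω := (hright.superset rfl).1
  have hg_vertical : g (0, z.2) = z.2 * g (0, 1) := by
    rw [← smul_eq_mul, ← map_smul, Prod.smul_mk, smul_zero, smul_eq_mul, mul_one]
  rw [← hg_vertical]
  exact stmt_14_general hu.2.1 hl hr (hu.eq_zero_of_fst_notMem_Ioo hΩ hl (by simp)).ge
    (hu.eq_zero_of_fst_notMem_Ioo hΩ hr (by simp)).ge hz hz₀ (by linarith) hg.hasFDerivWithinAt
end

section
/- Write Ω = {(x, y) : x ∈ [a, b], φ₁(x) ≤ y ≤ φ₂(x)} with φ₁ convex and φ₂ concave on [a, b]. Suppose both vertical lines of support of Ω are angular, i.e. φ₁(a) = φ₂(a), φ₁(b) = φ₂(b), and the one-sided derivatives φ₁'(a+), φ₂'(a+), φ₁'(b−), φ₂'(b−) are all finite. Let m = max{ |φ₁'(a+)|, |φ₂'(a+)|, |φ₁'(b−)|, |φ₂'(b−)| } (equivalently, m = max{|φ_i'(x)| : i ∈ {1,2}, x ∈ [a,b]}). Then K_∞(Ω) = sup{ ‖u_x‖_∞ / ‖u_y‖_∞ : u ∈ 𝒰_Ω, u ≢ 0 }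 = m; that is, ‖u_x‖_∞ ≤ m ‖u_y‖_∞ for every u ∈ 𝒰_Ω, and for every ε > 0 there exists a nonzero u ∈ 𝒰_Ω with ‖u_x‖_∞ ≥ (m − ε) ‖u_y‖_∞. -/
open Set MeasureTheory
open scoped ENNReal

/-!
The upper bound comes from horizontal lines. Let `z` be an interior point of `Ω` at which `u` is
differentiable. Since `φ₁` and `φ₂` meet over both endpoints, the horizontal line through `z` hits
one of the two graphs on either side of `z`, say in `(x, φ x)` with `φ x = z.2`. There `u` vanishes,
so the tangent plane at `z` gives `(z.1 - x) * u_x z ≤ u z`. The point of the same graph below or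
above `z` is a zero of `u` too, hence
`u z ≤ ‖u_y‖_∞ * |φ x - φ z.1| ≤ m * ‖u_y‖_∞ * |x - z.1|`.

The constant is attained by `u = min (φ₂ x - y) (y - φ₁ x)`. It satisfies `|u_y| ≤ 1`, and near the
two graphs its horizontal increments are those of `φ₁` and `φ₂`. So `‖u_x‖_∞` is a Lipschitz
constant of both functions on `[a, b]`, and by convexity `m` is the least such constant.
-/

open Filter Topology NNReal

section Concave

variable {E : Type*} [NormedAddCommGroup E] [NormedSpace ℝ E] {s : Set E} {f : E → ℝ}

theorem le_add_of_concaveOn_of_hasFDerivAt (hf : ConcaveOn ℝ s f) {z w : E} {g : E →L[ℝ] ℝ}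
    (hz : z ∈ s) (hw : w ∈ s) (hg : HasFDerivAt f g z) : f w ≤ f z + g (w - z) := by
  have secant_le : ∀ t ∈ Ioo (0 : ℝ) 1, f w - f z ≤ t⁻¹ • (f (z + t • (w - z)) - f z) := by
    intro t ht
    have h := hf.2 hz hw (sub_nonneg.2 ht.2.le) ht.1.le (sub_add_cancel 1 t)
    rw [show (1 - t) • z + t • w = z + t • (w - z) by module] at h
    simp only [smul_eq_mul] at h ⊢
    rw [inv_mul_eq_div, le_div_iff₀ ht.1]
    linarith
  rw [← sub_le_iff_le_add']
  exact ge_of_tendsto (hg.hasLineDerivAt (w - z)).tendsto_slope_zero_right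
    (eventually_of_mem (Ioo_mem_nhdsGT one_pos) secant_le)

theorem pos_of_concaveOn_of_mem_interior (hf : ConcaveOn ℝ s f) (hf₀ : ∀ y ∈ s, 0 ≤ f y)
    {z x : E} (hz : z ∈ s) (hfz : 0 < f z) (hx : x ∈ interior s) : 0 < f x := by
  have hline : ContinuousAt (fun t : ℝ => x + t • (x - z)) 0 := by fun_prop
  have hnear : ∀ᶠ t : ℝ in 𝓝 0, x + t • (x - z) ∈ s :=
    hline.eventually_mem (by simpa using mem_interior_iff_mem_nhds.1 hx)
  have hpos : ∀ᶠ t : ℝ in 𝓝[>] 0, 0 < t := self_mem_nhdsWithin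
  obtain ⟨t, hw, ht⟩ := ((hnear.filter_mono nhdsWithin_le_nhds).and hpos).exists
  have hx_eq : (1 / (1 + t)) • (x + t • (x - z)) + (t / (1 + t)) • z = x := by
    match_scalars <;> field_simp
    ring
  have hsum : 1 / (1 + t) + t / (1 + t) = 1 := by field_simp
  calc 0 < (1 / (1 + t)) • f (x + t • (x - z)) + (t / (1 + t)) • f z :=
        add_pos_of_nonneg_of_pos (smul_nonneg (by positivity) (hf₀ _ hw))
          (smul_pos (by positivity) hfz)
    _ ≤ f ((1 / (1 + t)) • (x + t • (x - z)) + (t / (1 + t)) • z) :=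
        hf.2 hw hz (by positivity) (by positivity) hsum
    _ = f x := by rw [hx_eq]

theorem subset_closure_setOf_of_ae [MeasurableSpace E] {μ : Measure E} [μ.IsOpenPosMeasure]
    (hs : Convex ℝ s) (hne : (interior s).Nonempty) {p : E → Prop}
    (hp : ∀ᵐ z ∂μ, z ∈ interior s → p z) : s ⊆ closure {z ∈ interior s | p z} := by
  have hsub : interior s ⊆ closure {z ∈ interior s | p z} :=
    ((Measure.dense_of_ae hp).open_subset_closure_inter isOpen_interior).trans
      (closure_mono fun z hz => ⟨hz.1, hz.2 hz.1⟩)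
  calc s ⊆ closure s := subset_closure
    _ = closure (interior s) := (hs.closure_interior_eq_closure_of_nonempty_interior hne).symm
    _ ⊆ closure {z ∈ interior s | p z} := closure_minimal hsub isClosed_closure

end Concave

section AlmostEverywhere

variable {E : Type*} [NormedAddCommGroup E] [NormedSpace ℝ E] [FiniteDimensional ℝ E]
  [MeasurableSpace E] [BorelSpace E] {μ : Measure E} [μ.IsAddHaarMeasure] {s : Set E}

theorem ae_differentiableAt_of_locallyLipschitzOn {F : Type*} [NormedAddCommGroup F]
    [NormedSpace ℝ F] [FiniteDimensional ℝ F] {f : E → F} (hs : IsOpen s)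
    (hf : LocallyLipschitzOn s f) : ∀ᵐ z ∂μ, z ∈ s → DifferentiableAt ℝ f z := by
  refine measure_null_of_locally_null _ fun x hx => ?_
  obtain ⟨hxs, -⟩ : x ∈ s ∧ ¬DifferentiableAt ℝ f x := by simpa using hx
  obtain ⟨K, t, ht, hLip⟩ := hf hxs
  rw [hs.nhdsWithin_eq hxs] at ht
  refine ⟨{z | ¬(z ∈ interior t → DifferentiableAt ℝ f z)}, ?_, ?_⟩
  · filter_upwards [self_mem_nhdsWithin, mem_nhdsWithin_of_mem_nhds (interior_mem_nhds.2 ht)]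
      with z hz hzt hdiff
    exact hz fun _ => hdiff hzt
  · change ∀ᵐ z ∂μ, z ∈ interior t → DifferentiableAt ℝ f z
    filter_upwards [hLip.ae_differentiableWithinAt_of_mem] with z hz hzt
    exact (hz (interior_subset hzt)).differentiableAt (mem_interior_iff_mem_nhds.1 hzt)

variable {f : E → ℝ}

theorem apply_add_le_of_ae_fderiv_le (hf : ConcaveOn ℝ s f) (hfc : ContinuousOn f s) {v : E}
    {N : ℝ} (hN : ∀ᵐ z ∂μ.restrict s, fderiv ℝ f z v ≤ N) {w : E} (hw : w ∈ s)
    (hwv : w + v ∈ interior s) : f (w + v) ≤ f w + N := by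
  -- `f` is differentiable with the stated bound on a dense part of `s`, which accumulates at `w`.
  let G : Set E := {z ∈ interior s | DifferentiableAt ℝ f z ∧ fderiv ℝ f z v ≤ N}
  have hG : ∀ᵐ z ∂μ, z ∈ interior s → DifferentiableAt ℝ f z ∧ fderiv ℝ f z v ≤ N := by
    filter_upwards [ae_differentiableAt_of_locallyLipschitzOn isOpen_interior
      hf.locallyLipschitzOn_interior, (ae_restrict_iff' isOpen_interior.measurableSet).1
      (ae_restrict_of_ae_restrict_of_subset interior_subset hN)] with z hdiff hle hz
    exact ⟨hdiff hz, hle hz⟩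
  have : (𝓝[G] w).NeBot :=
    mem_closure_iff_nhdsWithin_neBot.1 (subset_closure_setOf_of_ae hf.1 ⟨_, hwv⟩ hG hw)
  have hGs : G ⊆ s := fun z hz => interior_subset hz.1
  have htranslate : Tendsto (· + v) (𝓝[G] w) (𝓝 (w + v)) :=
    (continuous_add_const v).continuousWithinAt
  have hleft : Tendsto (fun z => f (z + v)) (𝓝[G] w) (𝓝 (f (w + v))) :=
    (hfc.continuousAt (mem_interior_iff_mem_nhds.1 hwv)).tendsto.comp htranslate
  have hright : Tendsto (fun z => f z + N) (𝓝[G] w) (𝓝 (f w + N)) :=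
    ((hfc w hw).mono hGs).tendsto.add_const N
  refine le_of_tendsto_of_tendsto hleft hright ?_
  filter_upwards [htranslate.eventually (isOpen_interior.mem_nhds hwv), self_mem_nhdsWithin]
    with z hzv hz
  calc f (z + v) ≤ f z + fderiv ℝ f z (z + v - z) :=
        le_add_of_concaveOn_of_hasFDerivAt hf (hGs hz) (interior_subset hzv) hz.2.1.hasFDerivAt
    _ ≤ f z + N := by rw [add_sub_cancel_left]; gcongr; exact hz.2.2

theorem apply_add_smul_le_of_ae_abs_fderiv_le (hf : ConcaveOn ℝ s f) (hfc : ContinuousOn f s)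
    {v : E} {N : ℝ} (hN : ∀ᵐ z ∂μ.restrict s, |fderiv ℝ f z v| ≤ N) {w : E} {t : ℝ} (hw : w ∈ s)
    (hwv : w + t • v ∈ interior s) : f (w + t • v) ≤ f w + N * |t| := by
  refine apply_add_le_of_ae_fderiv_le (μ := μ) hf hfc ?_ hw hwv
  filter_upwards [hN] with z hz
  calc fderiv ℝ f z (t • v) ≤ |fderiv ℝ f z (t • v)| := le_abs_self _
    _ = |fderiv ℝ f z v| * |t| := by rw [map_smul, smul_eq_mul, abs_mul, mul_comm]
    _ ≤ N * |t| := by gcongr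

end AlmostEverywhere

section Lipschitz

variable {K : ℝ≥0}

theorem lipschitzOnWith_of_convex_of_eventually_dist_le {E F : Type*} [NormedAddCommGroup E]
    [NormedSpace ℝ E] [PseudoMetricSpace F] {s : Set E} {f : E → F} (hs : Convex ℝ s)
    (hf : ∀ x ∈ s, ∀ᶠ y in 𝓝[s] x, dist (f y) (f x) ≤ K * dist y x) : LipschitzOnWith K f s := by
  have hfc : ContinuousOn f s := by
    refine fun x hx => tendsto_iff_dist_tendsto_zero.2 (squeeze_zero'
      (Eventually.of_forall fun _ => dist_nonneg) (hf x hx) ?_)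
    have hdist : Tendsto (fun y => K * dist y x) (𝓝 x) (𝓝 (K * dist x x)) :=
      ((continuous_id.dist continuous_const).const_mul _).tendsto x
    rw [dist_self, mul_zero] at hdist
    exact hdist.mono_left nhdsWithin_le_nhds
  refine LipschitzOnWith.of_dist_le_mul fun x hx y hy => ?_
  have hline : MapsTo (AffineMap.lineMap x y) (Icc (0 : ℝ) 1) s := fun t ht =>
    hs.lineMap_mem hx hy ht
  have hslope : ∀ t ∈ Ico (0 : ℝ) 1, ∀ᶠ r in 𝓝[>] t,
      slope (fun t => dist (f (AffineMap.lineMap x y t)) (f x)) t r ≤ K * dist x y := by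
    intro t ht
    have hlim : Tendsto (AffineMap.lineMap x y) (𝓝[>] t) (𝓝[s] AffineMap.lineMap x y t) :=
      tendsto_nhdsWithin_iff.2 ⟨AffineMap.lineMap_continuous.continuousWithinAt,
        eventually_of_mem (Ioo_mem_nhdsGT ht.2) fun r hr => hline ⟨ht.1.trans hr.1.le, hr.2.le⟩⟩
    filter_upwards [hlim.eventually (hf _ (hline ⟨ht.1, ht.2.le⟩)), self_mem_nhdsWithin]
      with r hr (htr : t < r)
    rw [dist_lineMap_lineMap, Real.dist_eq, abs_of_pos (sub_pos.2 htr)] at hr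
    rw [slope_def_field, div_le_iff₀ (sub_pos.2 htr)]
    linarith [dist_triangle (f (AffineMap.lineMap x y r)) (f (AffineMap.lineMap x y t)) (f x)]
  have hcont : ContinuousOn (fun t => dist (f (AffineMap.lineMap x y t)) (f x)) (Icc (0 : ℝ) 1) :=
    fun t ht => ((hfc.comp AffineMap.lineMap_continuous.continuousOn hline) t ht).dist
      continuousWithinAt_const
  have hbound := image_le_of_liminf_slope_right_le_deriv_boundary
    (B := fun t => K * dist x y * t)
    (B' := fun _ => K * dist x y) hcont
    (by simp) (by fun_prop)
    (fun t _ => by simpa using ((hasDerivAt_id t).const_mul (K * dist x y)).hasDerivWithinAt)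
    (fun t ht r hr => ((hslope t ht).mono fun _ h => h.trans_lt hr).frequently)
    (right_mem_Icc.2 zero_le_one)
  rw [dist_comm (f x)]
  simpa using hbound

theorem norm_le_of_hasDerivWithinAt_of_lipschitzOnWith {F : Type*} [NormedAddCommGroup F]
    [NormedSpace ℝ F] {s : Set ℝ} {x : ℝ} {f : ℝ → F} {f' : F} (hf : HasDerivWithinAt f f' s x)
    (hs : UniqueDiffWithinAt ℝ s x) (hx : x ∈ s) (hLip : LipschitzOnWith K f s) : ‖f'‖ ≤ K := by
  have : (𝓝[s \ {x}] x).NeBot :=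
    accPt_principal_iff_nhdsWithin.1 (uniqueDiffWithinAt_iff_accPt.1 hs)
  refine le_of_tendsto (hasDerivWithinAt_iff_tendsto_slope.1 hf).norm ?_
  filter_upwards [self_mem_nhdsWithin] with y hy
  have hpos : 0 < ‖y - x‖ := norm_pos_iff.2 (sub_ne_zero.2 hy.2)
  rw [slope_def_module, norm_smul, norm_inv, inv_mul_le_iff₀ hpos, mul_comm]
  exact hLip.norm_sub_le hy.1 hx

section ConvexIcc

variable {a b da db : ℝ} {φ : ℝ → ℝ}

theorem slope_mem_Icc_of_convexOn_Icc (hφ : ConvexOn ℝ (Icc a b) φ)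
    (ha : HasDerivWithinAt φ da (Ici a) a) (hb : HasDerivWithinAt φ db (Iic b) b) {x y : ℝ}
    (hx : a ≤ x) (hxy : x < y) (hy : y ≤ b) : slope φ x y ∈ Icc da db := by
  have haI : a ∈ Icc a b := ⟨le_rfl, hx.trans (hxy.le.trans hy)⟩
  have hbI : b ∈ Icc a b := ⟨haI.2, le_rfl⟩
  have hxI : x ∈ Icc a b := ⟨hx, hxy.le.trans hy⟩
  have hyI : y ∈ Icc a b := ⟨hx.trans hxy.le, hy⟩
  have hay : a < y := hx.trans_lt hxy
  have hxb : x < b := hxy.trans_le hy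
  constructor
  · calc da ≤ slope φ a y :=
          hφ.le_slope_of_hasDerivWithinAt_Ioi haI hyI hay (ha.mono Ioi_subset_Ici_self)
      _ = slope φ y a := slope_comm ..
      _ ≤ slope φ y x := hφ.slope_mono hyI ⟨haI, hay.ne⟩ ⟨hxI, hxy.ne⟩ hx
      _ = slope φ x y := slope_comm ..
  · calc slope φ x y ≤ slope φ x b := hφ.slope_mono hxI ⟨hyI, hxy.ne'⟩ ⟨hbI, hxb.ne'⟩ hy
      _ ≤ db := hφ.slope_le_of_hasDerivWithinAt_Iio hxI hbI hxb (hb.mono Iio_subset_Iic_self)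

theorem lipschitzOnWith_Icc_iff_of_convexOn (hab : a < b) (hφ : ConvexOn ℝ (Icc a b) φ)
    (ha : HasDerivWithinAt φ da (Ici a) a) (hb : HasDerivWithinAt φ db (Iic b) b) :
    LipschitzOnWith K φ (Icc a b) ↔ |da| ≤ K ∧ |db| ≤ K := by
  constructor
  · intro hLip
    have bound {x d : ℝ} (hx : x ∈ Icc a b) (hd : HasDerivWithinAt φ d (Icc a b) x) : |d| ≤ K :=
      norm_le_of_hasDerivWithinAt_of_lipschitzOnWith hd (uniqueDiffOn_Icc hab x hx) hx hLip
    exact ⟨bound (left_mem_Icc.2 hab.le) (ha.mono Icc_subset_Ici_self),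
      bound (right_mem_Icc.2 hab.le) (hb.mono Icc_subset_Iic_self)⟩
  · rintro ⟨hda, hdb⟩
    refine LipschitzOnWith.of_dist_le_mul fun x hx y hy => ?_
    wlog hxy : x < y generalizing x y
    · rcases (not_lt.1 hxy).eq_or_lt with rfl | hyx
      · simp
      · rw [dist_comm (φ x), dist_comm x]
        exact this y hy x hx hyx
    obtain ⟨hlo, hhi⟩ := slope_mem_Icc_of_convexOn_Icc hφ ha hb hx.1 hxy hy.2
    have hslope : |slope φ x y| ≤ K :=
      abs_le.2 ⟨(abs_le.1 hda).1.trans hlo, hhi.trans (abs_le.1 hdb).2⟩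
    rw [dist_comm (φ x), dist_comm x, Real.dist_eq, Real.dist_eq]
    rwa [slope_def_field, abs_div, div_le_iff₀ (abs_pos.2 (sub_ne_zero.2 hxy.ne'))] at hslope

theorem lipschitzOnWith_Icc_iff_of_concaveOn (hab : a < b) (hφ : ConcaveOn ℝ (Icc a b) φ)
    (ha : HasDerivWithinAt φ da (Ici a) a) (hb : HasDerivWithinAt φ db (Iic b) b) :
    LipschitzOnWith K φ (Icc a b) ↔ |da| ≤ K ∧ |db| ≤ K := by
  rw [← lipschitzOnWith_neg_iff, lipschitzOnWith_Icc_iff_of_convexOn hab hφ.neg ha.neg hb.neg,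
    abs_neg, abs_neg]

end ConvexIcc

end Lipschitz

section Plane

variable {Ω : Set (ℝ × ℝ)} {u f : ℝ × ℝ → ℝ}

theorem ae_abs_le_toNNReal_linfN (h : LinfN Ω f ≠ ⊤) :
    ∀ᵐ z ∂volume.restrict Ω, |f z| ≤ (LinfN Ω f).toNNReal := by
  filter_upwards [ENNReal.ae_le_essSup (μ := volume.restrict Ω)
    fun z => ENNReal.ofReal |f z|] with z hz
  exact (ENNReal.ofReal_le_iff_le_toReal h).1 hz

theorem linfN_uh_le (hΩ : Convex ℝ Ω) {v : ℝ × ℝ} {C : ℝ≥0}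
    (h : ∀ z ∈ interior Ω, ∀ g : ℝ × ℝ →L[ℝ] ℝ, HasFDerivAt u g z → |g v| ≤ C) :
    LinfN Ω (uh v u) ≤ C := by
  refine essSup_le_of_ae_le _ ?_
  rw [← Measure.restrict_congr_set (interior_ae_eq_of_null_frontier (hΩ.addHaar_frontier volume))]
  filter_upwards [ae_restrict_mem isOpen_interior.measurableSet] with z hz
  rw [← ENNReal.ofReal_coe_nnreal]
  refine ENNReal.ofReal_le_ofReal ?_
  by_cases hd : DifferentiableAt ℝ u z
  · exact h z hz _ hd.hasFDerivAt
  · -- `fderiv` has the junk value `0` here.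
    simp [uh, fderiv_zero_of_not_differentiableAt hd]

theorem MemU.linfN_uh_ne_top (hu : MemU Ω u) (v : ℝ × ℝ) : LinfN Ω (uh v u) ≠ ⊤ := by
  obtain ⟨-, hconc, -, C, hC⟩ := hu
  refine ((linfN_uh_le hconc.1 (C := (C * ‖v‖).toNNReal) fun z hz g hg => ?_).trans_lt
    ENNReal.coe_lt_top).ne
  calc |g v| ≤ C * ‖v‖ := g.le_of_opNorm_le (hC z hz g hg) v
    _ ≤ (C * ‖v‖).toNNReal := Real.le_coe_toNNReal _

theorem MemU.apply_eq_zero (hu : MemU Ω u) {z : ℝ × ℝ} (hz : z ∈ Ω \ interior Ω) : u z = 0 :=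
  hu.2.2.1 z ⟨subset_closure hz.1, hz.2⟩

theorem MemU.sub_mul_fst_le (hu : MemU Ω u) {K M : ℝ≥0} {I : Set ℝ} {φ : ℝ → ℝ}
    (hM : ∀ᵐ z ∂volume.restrict Ω, |uy u z| ≤ M) (hφ : LipschitzOnWith K φ I)
    (hgraph : ∀ t ∈ I, (t, φ t) ∈ Ω \ interior Ω) {z : ℝ × ℝ} (hz : z ∈ interior Ω)
    (hzI : z.1 ∈ I) {x : ℝ} (hx : x ∈ I) (hxz : φ x = z.2) {g : ℝ × ℝ →L[ℝ] ℝ}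
    (hg : HasFDerivAt u g z) : (z.1 - x) * g (1, 0) ≤ K * M * |z.1 - x| := by
  have htangent : (z.1 - x) * g (1, 0) ≤ u z := by
    have h := le_add_of_concaveOn_of_hasFDerivAt hu.2.1 (interior_subset hz) (hgraph x hx).1 hg
    have hdir : (x, φ x) - z = (x - z.1) • ((1, 0) : ℝ × ℝ) := by ext <;> simp [hxz]
    rw [hu.apply_eq_zero (hgraph x hx), hdir, map_smul, smul_eq_mul] at h
    linarith
  have hvertical : u z ≤ M * |z.2 - φ z.1| := by
    have hz_eq : (z.1, φ z.1) + (z.2 - φ z.1) • ((0, 1) : ℝ × ℝ) = z := by ext <;> simp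
    have h := apply_add_smul_le_of_ae_abs_fderiv_le hu.2.1 hu.1 (v := (0, 1)) hM
      (hgraph z.1 hzI).1 (hz_eq.symm ▸ hz)
    rwa [hz_eq, hu.apply_eq_zero (hgraph z.1 hzI), zero_add] at h
  calc (z.1 - x) * g (1, 0) ≤ M * |z.2 - φ z.1| := htangent.trans hvertical
    _ = M * dist (φ z.1) (φ x) := by rw [← hxz, dist_comm, Real.dist_eq]
    _ ≤ M * (K * dist z.1 x) := by gcongr; exact hφ.dist_le_mul z.1 hzI x hx
    _ = K * M * |z.1 - x| := by rw [Real.dist_eq]; ring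

theorem dist_le_of_ae_abs_ux_le (hu : ConcaveOn ℝ Ω u) (hc : ContinuousOn u Ω) {N : ℝ}
    (hN : ∀ᵐ z ∂volume.restrict Ω, |ux u z| ≤ N) {x t y : ℝ} (hx : (x, y) ∈ interior Ω)
    (ht : (t, y) ∈ interior Ω) : dist (u (t, y)) (u (x, y)) ≤ N * dist t x := by
  have le_add : ∀ {p q : ℝ}, (p, y) ∈ interior Ω → (q, y) ∈ interior Ω →
      u (q, y) ≤ u (p, y) + N * |q - p| := by
    intro p q hp hq
    have hq_eq : (p, y) + (q - p) • ((1, 0) : ℝ × ℝ) = (q, y) := by ext <;> simp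
    have h := apply_add_smul_le_of_ae_abs_fderiv_le hu hc (v := (1, 0)) hN
      (interior_subset hp) (hq_eq.symm ▸ hq)
    rwa [hq_eq] at h
  rw [Real.dist_eq, Real.dist_eq, abs_sub_le_iff]
  constructor
  · linarith [le_add hx ht]
  · rw [abs_sub_comm t x]
    linarith [le_add ht hx]

theorem lipschitzOnWith_Icc_of_eventually_dist_slice_eq (hu : ConcaveOn ℝ Ω u)
    (hc : ContinuousOn u Ω) {N : ℝ≥0} (hN : ∀ᵐ z ∂volume.restrict Ω, |ux u z| ≤ N) {a b : ℝ}
    (hab : a ≠ b) {φ : ℝ → ℝ} (hφ : ContinuousOn φ (Icc a b))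
    (hslice : ∀ x ∈ Ioo a b, ∃ y, (x, y) ∈ interior Ω ∧
      ∀ᶠ t in 𝓝 x, dist (u (t, y)) (u (x, y)) = dist (φ t) (φ x)) :
    LipschitzOnWith N φ (Icc a b) := by
  rw [← closure_Ioo hab] at hφ ⊢
  rw [lipschitzOnWith_closure_iff hφ]
  refine lipschitzOnWith_of_convex_of_eventually_dist_le (convex_Ioo a b) fun x hx => ?_
  obtain ⟨y, hy, heq⟩ := hslice x hx
  have hnear : ∀ᶠ t in 𝓝 x, (t, y) ∈ interior Ω :=
    (Continuous.prodMk_left y).continuousAt.eventually_mem (isOpen_interior.mem_nhds hy)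
  filter_upwards [nhdsWithin_le_nhds heq, nhdsWithin_le_nhds hnear] with t ht hty
  rw [← ht]
  exact dist_le_of_ae_abs_ux_le hu hc hN hy hty

end Plane

section GraphRegion

variable {a b : ℝ} {φ₁ φ₂ : ℝ → ℝ} {u : ℝ × ℝ → ℝ} {K M N : ℝ≥0}

/-- The region `Ω` over `[a, b]` between the graphs of `φ₁` and `φ₂`, both included. -/
def graphRegion (a b : ℝ) (φ₁ φ₂ : ℝ → ℝ) : Set (ℝ × ℝ) :=
  {z | z.1 ∈ Icc a b ∧ z.2 ∈ Icc (φ₁ z.1) (φ₂ z.1)}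

theorem convex_graphRegion (hφ₁ : ConvexOn ℝ (Icc a b) φ₁) (hφ₂ : ConcaveOn ℝ (Icc a b) φ₂) :
    Convex ℝ (graphRegion a b φ₁ φ₂) := by
  convert hφ₁.convex_epigraph.inter hφ₂.convex_hypograph using 1
  ext z
  exact and_and_left

theorem isClosed_graphRegion (h₁ : ContinuousOn φ₁ (Icc a b)) (h₂ : ContinuousOn φ₂ (Icc a b)) :
    IsClosed (graphRegion a b φ₁ φ₂) := by
  convert (isClosed_Icc.epigraph h₁).inter (isClosed_Icc.hypograph h₂) using 1
  ext z
  exact and_and_left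

theorem mem_interior_graphRegion_iff (h₁ : ContinuousOn φ₁ (Icc a b))
    (h₂ : ContinuousOn φ₂ (Icc a b)) {z : ℝ × ℝ} :
    z ∈ interior (graphRegion a b φ₁ φ₂) ↔ z.1 ∈ Ioo a b ∧ z.2 ∈ Ioo (φ₁ z.1) (φ₂ z.1) := by
  constructor
  · intro hz
    have hz' := mem_interior_iff_mem_nhds.1 hz
    have hfst : ∀ᶠ x in 𝓝 z.1, x ∈ Icc a b := by
      filter_upwards [(Continuous.prodMk_left z.2).continuousAt.eventually_mem hz'] with x hx
      exact hx.1
    have hsnd : ∀ᶠ y in 𝓝 z.2, y ∈ Icc (φ₁ z.1) (φ₂ z.1) := by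
      filter_upwards [(Continuous.prodMk_right z.1).continuousAt.eventually_mem hz'] with y hy
      exact hy.2
    rw [← interior_Icc, ← interior_Icc]
    exact ⟨mem_interior_iff_mem_nhds.2 hfst, mem_interior_iff_mem_nhds.2 hsnd⟩
  · rintro ⟨hfst, hlo, hhi⟩
    have hI := Icc_mem_nhds hfst.1 hfst.2
    rw [mem_interior_iff_mem_nhds]
    filter_upwards [continuousAt_fst.eventually_mem hI,
      ((h₁.continuousAt hI).comp continuousAt_fst).eventually_lt continuousAt_snd hlo,
      continuousAt_snd.eventually_lt ((h₂.continuousAt hI).comp continuousAt_fst) hhi]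
      with w hw hw₁ hw₂ using ⟨hw, hw₁.le, hw₂.le⟩

theorem lt_of_interior_graphRegion_nonempty (hφ₁ : ConvexOn ℝ (Icc a b) φ₁)
    (hφ₂ : ConcaveOn ℝ (Icc a b) φ₂) (h₁ : ContinuousOn φ₁ (Icc a b))
    (h₂ : ContinuousOn φ₂ (Icc a b)) (hle : ∀ x ∈ Icc a b, φ₁ x ≤ φ₂ x)
    (hne : (interior (graphRegion a b φ₁ φ₂)).Nonempty) {x : ℝ} (hx : x ∈ Ioo a b) :
    φ₁ x < φ₂ x := by
  obtain ⟨z, hz⟩ := hne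
  obtain ⟨hzI, hlo, hhi⟩ := (mem_interior_graphRegion_iff h₁ h₂).1 hz
  exact sub_pos.1 <| pos_of_concaveOn_of_mem_interior (hφ₂.sub hφ₁)
    (fun y hy => sub_nonneg.2 (hle y hy)) (Ioo_subset_Icc_self hzI) (sub_pos.2 (hlo.trans hhi))
    (by rwa [interior_Icc])

theorem exists_mem_uIcc_eq_or_eq {e c y : ℝ} (h₁ : ContinuousOn φ₁ (uIcc e c))
    (h₂ : ContinuousOn φ₂ (uIcc e c)) (he : φ₁ e = φ₂ e) (hy : y ∈ Icc (φ₁ c) (φ₂ c)) :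
    ∃ x ∈ uIcc e c, φ₁ x = y ∨ φ₂ x = y := by
  rcases le_total y (φ₁ e) with hye | hye
  · obtain ⟨x, hx, hxy⟩ := intermediate_value_uIcc h₁ (mem_uIcc_of_ge hy.1 hye)
    exact ⟨x, hx, .inl hxy⟩
  · obtain ⟨x, hx, hxy⟩ := intermediate_value_uIcc h₂ (mem_uIcc_of_le (he ▸ hye) hy.2)
    exact ⟨x, hx, .inr hxy⟩

theorem MemU.exists_sub_mul_fst_le (hu : MemU (graphRegion a b φ₁ φ₂) u)
    (hle : ∀ x ∈ Icc a b, φ₁ x ≤ φ₂ x) (h₁ : LipschitzOnWith K φ₁ (Icc a b))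
    (h₂ : LipschitzOnWith K φ₂ (Icc a b))
    (hM : ∀ᵐ z ∂volume.restrict (graphRegion a b φ₁ φ₂), |uy u z| ≤ M) {z : ℝ × ℝ}
    (hz : z ∈ interior (graphRegion a b φ₁ φ₂)) {g : ℝ × ℝ →L[ℝ] ℝ} (hg : HasFDerivAt u g z)
    {e : ℝ} (he : e ∈ Icc a b) (heq : φ₁ e = φ₂ e) :
    ∃ x ∈ uIcc e z.1, x ≠ z.1 ∧ (z.1 - x) * g (1, 0) ≤ K * M * |z.1 - x| := by
  have interior_iff {w} := mem_interior_graphRegion_iff h₁.continuousOn h₂.continuousOn (z := w)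
  obtain ⟨hz₀, hlo, hhi⟩ := interior_iff.1 hz
  have hzI : z.1 ∈ Icc a b := Ioo_subset_Icc_self hz₀
  have hsub : uIcc e z.1 ⊆ Icc a b := ordConnected_Icc.uIcc_subset he hzI
  obtain ⟨x, hx, hxz⟩ := exists_mem_uIcc_eq_or_eq (h₁.continuousOn.mono hsub)
    (h₂.continuousOn.mono hsub) heq ⟨hlo.le, hhi.le⟩
  have hne : x ≠ z.1 := by
    rintro rfl
    exact hxz.elim hlo.ne hhi.ne'
  refine ⟨x, hx, hne, ?_⟩
  rcases hxz with hxz | hxz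
  · exact hu.sub_mul_fst_le hM h₁
      (fun t ht => ⟨⟨ht, le_rfl, hle t ht⟩, fun h => (interior_iff.1 h).2.1.false⟩)
      hz hzI (hsub hx) hxz hg
  · exact hu.sub_mul_fst_le hM h₂
      (fun t ht => ⟨⟨ht, hle t ht, le_rfl⟩, fun h => (interior_iff.1 h).2.2.false⟩)
      hz hzI (hsub hx) hxz hg

theorem MemU.linfN_ux_le (hu : MemU (graphRegion a b φ₁ φ₂) u)
    (hle : ∀ x ∈ Icc a b, φ₁ x ≤ φ₂ x) (h₁ : LipschitzOnWith K φ₁ (Icc a b))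
    (h₂ : LipschitzOnWith K φ₂ (Icc a b)) (ha : φ₁ a = φ₂ a) (hb : φ₁ b = φ₂ b) :
    LinfN (graphRegion a b φ₁ φ₂) (ux u) ≤ K * LinfN (graphRegion a b φ₁ φ₂) (uy u) := by
  have hfin : LinfN (graphRegion a b φ₁ φ₂) (uy u) ≠ ⊤ := hu.linfN_uh_ne_top (0, 1)
  rw [← ENNReal.coe_toNNReal hfin, ← ENNReal.coe_mul]
  refine linfN_uh_le (v := (1, 0)) hu.2.1.1 fun z hz g hg => ?_
  have hzI : z.1 ∈ Icc a b := (interior_subset hz).1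
  have hab : a ≤ b := hzI.1.trans hzI.2
  have slope_bound {e : ℝ} (he : e ∈ Icc a b) (heq : φ₁ e = φ₂ e) :=
    hu.exists_sub_mul_fst_le hle h₁ h₂ (ae_abs_le_toNNReal_linfN hfin) hz hg he heq
  obtain ⟨x, hx, hxz, hleft⟩ := slope_bound (left_mem_Icc.2 hab) ha
  obtain ⟨y, hy, hyz, hright⟩ := slope_bound (right_mem_Icc.2 hab) hb
  rw [uIcc_of_le hzI.1] at hx
  rw [uIcc_of_ge hzI.2] at hy
  have hxz' : 0 < z.1 - x := sub_pos.2 (hx.2.lt_of_ne hxz)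
  have hyz' : 0 < y - z.1 := sub_pos.2 (hy.1.lt_of_ne' hyz)
  rw [abs_of_pos hxz'] at hleft
  rw [abs_sub_comm, abs_of_pos hyz'] at hright
  rw [NNReal.coe_mul, abs_le']
  exact ⟨le_of_mul_le_mul_left (by linarith) hxz', le_of_mul_le_mul_left (by linarith) hyz'⟩

/-- The vertical distance from `z` to the nearer of the graphs of `φ₁` and `φ₂`, signed so that it
is negative outside the region between them. This is the extremal function for `‖u_x‖ / ‖u_y‖`. -/
noncomputable def verticalDist (φ₁ φ₂ : ℝ → ℝ) (z : ℝ × ℝ) : ℝ :=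
  min (φ₂ z.1 - z.2) (z.2 - φ₁ z.1)

theorem concaveOn_verticalDist (hφ₁ : ConvexOn ℝ (Icc a b) φ₁)
    (hφ₂ : ConcaveOn ℝ (Icc a b) φ₂) :
    ConcaveOn ℝ (graphRegion a b φ₁ φ₂) (verticalDist φ₁ φ₂) := by
  have hR := convex_graphRegion hφ₁ hφ₂
  have hsub : graphRegion a b φ₁ φ₂ ⊆ LinearMap.fst ℝ ℝ ℝ ⁻¹' Icc a b := fun z hz => hz.1
  exact (((hφ₂.comp_linearMap _).subset hsub hR).sub ((LinearMap.snd ℝ ℝ ℝ).convexOn hR)).inf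
    (((LinearMap.snd ℝ ℝ ℝ).concaveOn hR).sub ((hφ₁.comp_linearMap _).subset hsub hR))

theorem lipschitzOnWith_verticalDist (h₁ : LipschitzOnWith K φ₁ (Icc a b))
    (h₂ : LipschitzOnWith K φ₂ (Icc a b)) :
    LipschitzOnWith (K + 1) (verticalDist φ₁ φ₂) (graphRegion a b φ₁ φ₂) := by
  have comp_fst {φ : ℝ → ℝ} (h : LipschitzOnWith K φ (Icc a b)) :
      LipschitzOnWith K (φ ∘ Prod.fst) (graphRegion a b φ₁ φ₂) := by
    simpa only [mul_one] using h.comp LipschitzWith.prod_fst.lipschitzOnWith fun z hz => hz.1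
  have hsnd : LipschitzOnWith 1 Prod.snd (graphRegion a b φ₁ φ₂) :=
    LipschitzWith.prod_snd.lipschitzOnWith
  have hmin := lipschitzWith_min.comp_lipschitzOnWith
    (((comp_fst h₂).sub hsnd).prodMk (hsnd.sub (comp_fst h₁)))
  rwa [add_comm 1, max_self, one_mul] at hmin

theorem mem_interior_graphRegion_iff_verticalDist_pos (h₁ : ContinuousOn φ₁ (Icc a b))
    (h₂ : ContinuousOn φ₂ (Icc a b)) (ha : φ₁ a = φ₂ a) (hb : φ₁ b = φ₂ b) {z : ℝ × ℝ}
    (hz : z ∈ graphRegion a b φ₁ φ₂) :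
    z ∈ interior (graphRegion a b φ₁ φ₂) ↔ 0 < verticalDist φ₁ φ₂ z := by
  rw [mem_interior_graphRegion_iff h₁ h₂, verticalDist, lt_min_iff, sub_pos, sub_pos]
  refine ⟨fun h => ⟨h.2.2, h.2.1⟩, fun ⟨hhi, hlo⟩ => ⟨⟨?_, ?_⟩, hlo, hhi⟩⟩
  · refine hz.1.1.lt_of_ne fun h => ?_
    rw [← h] at hlo hhi
    linarith
  · refine hz.1.2.lt_of_ne fun h => ?_
    rw [h] at hlo hhi
    linarith

theorem memU_verticalDist (hφ₁ : ConvexOn ℝ (Icc a b) φ₁) (hφ₂ : ConcaveOn ℝ (Icc a b) φ₂)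
    (h₁ : LipschitzOnWith K φ₁ (Icc a b)) (h₂ : LipschitzOnWith K φ₂ (Icc a b))
    (ha : φ₁ a = φ₂ a) (hb : φ₁ b = φ₂ b) :
    MemU (graphRegion a b φ₁ φ₂) (verticalDist φ₁ φ₂) := by
  have hLip := lipschitzOnWith_verticalDist h₁ h₂
  refine ⟨hLip.continuousOn, concaveOn_verticalDist hφ₁ hφ₂, fun z hz => ?_, (K + 1 : ℝ≥0),
    fun z hz g hg => hg.le_of_lipschitzOn (mem_interior_iff_mem_nhds.1 hz) hLip⟩
  have hzR := (isClosed_graphRegion h₁.continuousOn h₂.continuousOn).frontier_subset hz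
  have hnonneg : 0 ≤ verticalDist φ₁ φ₂ z := le_min (sub_nonneg.2 hzR.2.2) (sub_nonneg.2 hzR.2.1)
  by_contra hne
  exact hz.2 <| (mem_interior_graphRegion_iff_verticalDist_pos h₁.continuousOn h₂.continuousOn
    ha hb hzR).2 (hnonneg.lt_of_ne' hne)

theorem linfN_uy_verticalDist_le_one {Ω : Set (ℝ × ℝ)} (hΩ : Convex ℝ Ω) :
    LinfN Ω (uy (verticalDist φ₁ φ₂)) ≤ 1 := by
  refine linfN_uh_le (v := (0, 1)) (C := 1) hΩ fun z _ g hg => ?_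
  have hLip : LipschitzWith 1 fun t : ℝ => verticalDist φ₁ φ₂ (z + t • (0, 1)) := by
    refine LipschitzWith.of_dist_le_mul fun t r => ?_
    refine (abs_min_sub_min_le_max _ _ _ _).trans (max_le ?_ ?_)
    · simp [Real.dist_eq, abs_sub_comm]
    · simp [Real.dist_eq]
  exact HasDerivAt.le_of_lipschitz (hg.hasLineDerivAt (0, 1)) hLip

theorem lipschitzOnWith_lower_of_ae_abs_ux_verticalDist_le
    (hu : MemU (graphRegion a b φ₁ φ₂) (verticalDist φ₁ φ₂)) (hab : a ≠ b)
    (h₁ : ContinuousOn φ₁ (Icc a b)) (h₂ : ContinuousOn φ₂ (Icc a b))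
    (hlt : ∀ x ∈ Ioo a b, φ₁ x < φ₂ x)
    (hN : ∀ᵐ z ∂volume.restrict (graphRegion a b φ₁ φ₂), |ux (verticalDist φ₁ φ₂) z| ≤ N) :
    LipschitzOnWith N φ₁ (Icc a b) := by
  refine lipschitzOnWith_Icc_of_eventually_dist_slice_eq hu.2.1 hu.1 hN hab h₁ fun x hx => ?_
  have hI : Icc a b ∈ 𝓝 x := Icc_mem_nhds hx.1 hx.2
  obtain ⟨y, hlo, hmid⟩ : ∃ y, φ₁ x < y ∧ y < (φ₁ x + φ₂ x) / 2 :=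
    exists_between (by linarith [hlt x hx])
  refine ⟨y, (mem_interior_graphRegion_iff h₁ h₂).2 ⟨hx, hlo, by linarith⟩, ?_⟩
  have hnear : ∀ᶠ t in 𝓝 x, y < (φ₁ t + φ₂ t) / 2 :=
    (((h₁.continuousAt hI).add (h₂.continuousAt hI)).div_const 2).eventually_const_lt hmid
  have value_eq : ∀ t, y < (φ₁ t + φ₂ t) / 2 → verticalDist φ₁ φ₂ (t, y) = y - φ₁ t :=
    fun t ht => min_eq_right (by linarith)
  filter_upwards [hnear] with t ht
  rw [value_eq t ht, value_eq x hmid, dist_sub_left]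

theorem lipschitzOnWith_upper_of_ae_abs_ux_verticalDist_le
    (hu : MemU (graphRegion a b φ₁ φ₂) (verticalDist φ₁ φ₂)) (hab : a ≠ b)
    (h₁ : ContinuousOn φ₁ (Icc a b)) (h₂ : ContinuousOn φ₂ (Icc a b))
    (hlt : ∀ x ∈ Ioo a b, φ₁ x < φ₂ x)
    (hN : ∀ᵐ z ∂volume.restrict (graphRegion a b φ₁ φ₂), |ux (verticalDist φ₁ φ₂) z| ≤ N) :
    LipschitzOnWith N φ₂ (Icc a b) := by
  refine lipschitzOnWith_Icc_of_eventually_dist_slice_eq hu.2.1 hu.1 hN hab h₂ fun x hx => ?_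
  have hI : Icc a b ∈ 𝓝 x := Icc_mem_nhds hx.1 hx.2
  obtain ⟨y, hmid, hhi⟩ : ∃ y, (φ₁ x + φ₂ x) / 2 < y ∧ y < φ₂ x :=
    exists_between (by linarith [hlt x hx])
  refine ⟨y, (mem_interior_graphRegion_iff h₁ h₂).2 ⟨hx, by linarith, hhi⟩, ?_⟩
  have hnear : ∀ᶠ t in 𝓝 x, (φ₁ t + φ₂ t) / 2 < y :=
    (((h₁.continuousAt hI).add (h₂.continuousAt hI)).div_const 2).eventually_lt_const hmid
  have value_eq : ∀ t, (φ₁ t + φ₂ t) / 2 < y → verticalDist φ₁ φ₂ (t, y) = φ₂ t - y :=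
    fun t ht => min_eq_left (by linarith)
  filter_upwards [hnear] with t ht
  rw [value_eq t ht, value_eq x hmid, dist_sub_right]

theorem lipschitzOnWith_toNNReal_linfN_ux_verticalDist (hφ₁ : ConvexOn ℝ (Icc a b) φ₁)
    (hφ₂ : ConcaveOn ℝ (Icc a b) φ₂) (hab : a ≠ b) (h₁ : ContinuousOn φ₁ (Icc a b))
    (h₂ : ContinuousOn φ₂ (Icc a b)) (hle : ∀ x ∈ Icc a b, φ₁ x ≤ φ₂ x)
    (hne : (interior (graphRegion a b φ₁ φ₂)).Nonempty)
    (hu : MemU (graphRegion a b φ₁ φ₂) (verticalDist φ₁ φ₂)) :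
    LipschitzOnWith (LinfN (graphRegion a b φ₁ φ₂) (ux (verticalDist φ₁ φ₂))).toNNReal φ₁
        (Icc a b) ∧
      LipschitzOnWith (LinfN (graphRegion a b φ₁ φ₂) (ux (verticalDist φ₁ φ₂))).toNNReal φ₂
        (Icc a b) := by
  have hlt : ∀ x ∈ Ioo a b, φ₁ x < φ₂ x := fun x hx =>
    lt_of_interior_graphRegion_nonempty hφ₁ hφ₂ h₁ h₂ hle hne hx
  have hN := ae_abs_le_toNNReal_linfN (hu.linfN_uh_ne_top (1, 0))
  exact ⟨lipschitzOnWith_lower_of_ae_abs_ux_verticalDist_le hu hab h₁ h₂ hlt hN,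
    lipschitzOnWith_upper_of_ae_abs_ux_verticalDist_le hu hab h₁ h₂ hlt hN⟩

end GraphRegion

/-- Theorem 8, finite case: if both vertical lines of support of `Ω` are
angular, with `m` the largest modulus of the four one-sided derivatives of `φ₁, φ₂` at
the endpoints, then `K_∞(Ω) = m`: `‖u_x‖_∞ ≤ m ‖u_y‖_∞` for every `u ∈ 𝒰_Ω`, and for
every `ε > 0` there is a nonzero `u ∈ 𝒰_Ω` with `(m - ε) ‖u_y‖_∞ ≤ ‖u_x‖_∞`. -/
theorem stmt_18 (a b : ℝ) (hab : a < b) (φ₁ φ₂ : ℝ → ℝ)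
    (hφ₁ : ConvexOn ℝ (Icc a b) φ₁) (hφ₂ : ConcaveOn ℝ (Icc a b) φ₂)
    (hφle : ∀ x ∈ Icc a b, φ₁ x ≤ φ₂ x)
    (Ω : Set (ℝ × ℝ))
    (hΩ : Ω = {z : ℝ × ℝ | z.1 ∈ Icc a b ∧ z.2 ∈ Icc (φ₁ z.1) (φ₂ z.1)})
    (hΩc : IsCompact Ω) (hΩint : (interior Ω).Nonempty)
    (heqa : φ₁ a = φ₂ a) (heqb : φ₁ b = φ₂ b)
    (d1a d2a d1b d2b : ℝ)
    (h1a : HasDerivWithinAt φ₁ d1a (Ici a) a) (h2a : HasDerivWithinAt φ₂ d2a (Ici a) a)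
    (h1b : HasDerivWithinAt φ₁ d1b (Iic b) b) (h2b : HasDerivWithinAt φ₂ d2b (Iic b) b)
    (m : ℝ) (hm : m = max (max |d1a| |d2a|) (max |d1b| |d2b|)) :
    (∀ u : ℝ × ℝ → ℝ, MemU Ω u →
      LinfN Ω (ux u) ≤ ENNReal.ofReal m * LinfN Ω (uy u)) ∧
    (∀ ε > (0 : ℝ), ∃ u : ℝ × ℝ → ℝ, MemU Ω u ∧ (∃ z ∈ Ω, u z ≠ 0) ∧
      ENNReal.ofReal (m - ε) * LinfN Ω (uy u) ≤ LinfN Ω (ux u)) := by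
  obtain rfl : Ω = graphRegion a b φ₁ φ₂ := hΩ
  lift m to ℝ≥0 using hm ▸ by positivity
  have lipschitz_iff (K : ℝ≥0) :
      LipschitzOnWith K φ₁ (Icc a b) ∧ LipschitzOnWith K φ₂ (Icc a b) ↔ m ≤ K := by
    rw [lipschitzOnWith_Icc_iff_of_convexOn hab hφ₁ h1a h1b,
      lipschitzOnWith_Icc_iff_of_concaveOn hab hφ₂ h2a h2b, ← NNReal.coe_le_coe, hm]
    simp only [max_le_iff]
    tauto
  obtain ⟨h₁, h₂⟩ := (lipschitz_iff m).2 le_rfl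
  rw [ENNReal.ofReal_coe_nnreal]
  refine ⟨fun u hu => hu.linfN_ux_le hφle h₁ h₂ heqa heqb, fun ε hε => ?_⟩
  have hmem := memU_verticalDist hφ₁ hφ₂ h₁ h₂ heqa heqb
  refine ⟨verticalDist φ₁ φ₂, hmem, ?_, ?_⟩
  · obtain ⟨z, hz⟩ := hΩint
    exact ⟨z, interior_subset hz, ((mem_interior_graphRegion_iff_verticalDist_pos
      h₁.continuousOn h₂.continuousOn heqa heqb (interior_subset hz)).1 hz).ne'⟩
  calc ENNReal.ofReal (m - ε) * LinfN _ (uy (verticalDist φ₁ φ₂)) ≤ ENNReal.ofReal m * 1 := by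
        gcongr
        exacts [by linarith, linfN_uy_verticalDist_le_one hmem.2.1.1]
    _ = m := by rw [mul_one, ENNReal.ofReal_coe_nnreal]
    _ ≤ LinfN _ (ux (verticalDist φ₁ φ₂)) := (ENNReal.coe_le_coe.2 <| (lipschitz_iff _).1 <|
        lipschitzOnWith_toNNReal_linfN_ux_verticalDist hφ₁ hφ₂ hab.ne h₁.continuousOn
          h₂.continuousOn hφle hΩint hmem).trans ENNReal.coe_toNNReal_le_self
end
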